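/- Let h_1, …, h_t ∈ ℝ[x,y], let α ∈ ℕ^n, β ∈ ℕ^p and N ∈ ℝ, and suppose both N + x^α y^β and N − x^α y^β belong to the truncated quadratic module Q(l). Then every real sequence z = (z_{αβ}) with z_{00} = 1, M_l(z) ⪰ 0, and M_{l−v_j}(h_j z) ⪰ 0 for j = 1, …, t satisfies |z_{αβ}| = |L_z(x^α y^β)| ≤ N. -/

import Mathlib

open MeasureTheory MvPolynomial Set

noncomputable section

/-- The Riesz-like linear functional `L_z` associated with a double-indexed real
sequence `z = (z_{αβ})`, sending `Σ f_{αβ} x^α y^β` to `Σ f_{αβ} z_{αβ}`. -/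
def Lz (n p : ℕ) (z : (Fin n → ℕ) → (Fin p → ℕ) → ℝ)
    (q : MvPolynomial (Fin n ⊕ Fin p) ℝ) : ℝ :=
  ∑ d ∈ q.support, q.coeff d * z (fun k => d (Sum.inl k)) (fun l => d (Sum.inr l))

/-- Every monomial `x^α y^β` of `q` satisfies `|α| ≤ i` and `|β| ≤ i`, i.e. `q` is in the
span of the monomial basis indexing the moment matrix `M_i`. -/
def DegOK (n p : ℕ) (i : ℕ) (q : MvPolynomial (Fin n ⊕ Fin p) ℝ) : Prop :=
  ∀ d ∈ q.support, (∑ k, d (Sum.inl k)) ≤ i ∧ (∑ l, d (Sum.inr l)) ≤ i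

/-- `⌈deg h / 2⌉`. -/
def halfDeg {σ : Type*} (h : MvPolynomial σ ℝ) : ℕ := (h.totalDegree + 1) / 2

/-- The truncated quadratic module `Q(l)` generated by `h_1, …, h_t`: elements of the
form `σ_0 + Σ_j σ_j h_j` with `σ_j` sums of squares, `deg σ_0 ≤ 2l` and
`deg (σ_j h_j) ≤ 2l`. -/
def Qmod (n p : ℕ) {ι : Type*} [Fintype ι]
    (hs : ι → MvPolynomial (Fin n ⊕ Fin p) ℝ) (l : ℕ) :
    Set (MvPolynomial (Fin n ⊕ Fin p) ℝ) :=
  {σ | ∃ (σ0 : MvPolynomial (Fin n ⊕ Fin p) ℝ)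
      (σs : ι → MvPolynomial (Fin n ⊕ Fin p) ℝ),
    IsSumSq σ0 ∧ (∀ j, IsSumSq (σs j)) ∧
    σ = σ0 + ∑ j, σs j * hs j ∧
    σ0.totalDegree ≤ 2 * l ∧ ∀ j, (σs j * hs j).totalDegree ≤ 2 * l}

/-!
The functional `L_z` is nonnegative on `Q(l)`, so applying it to `N ± x^α y^β` gives
`-N ≤ z_{αβ} ≤ N`. The positivity hypotheses only concern squares of polynomials of low degree,
whereas `Q(l)` only bounds the degree of each sum of squares as a whole. The two match because top
degree terms cannot cancel in a sum of squares: for a monomial order refining the total degree, the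
leading coefficient of a sum of squares is again a sum of squares, and over a formally real ring
two such coefficients only add up to zero if both vanish.
-/

section LeadingCoefficients

open scoped MonomialOrder

variable {σ R : Type*} {m : MonomialOrder σ}

theorem isSumSq_coeff_of_degree_le [CommSemiring R] {f : MvPolynomial σ R} {d : σ →₀ ℕ}
    (hf : IsSumSq (m.leadingCoeff f)) (hd : m.degree f ≼[m] d) : IsSumSq (f.coeff d) := by
  rcases hd.eq_or_lt with h_eq | h_lt
  · rwa [← m.toSyn.injective h_eq]
  · rw [m.coeff_eq_zero_of_lt h_lt]
    exact .zero

theorem degree_le_degree_add_of_isSumSq_leadingCoeff [CommSemiring R] [IsFormallyReal R]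
    {f g : MvPolynomial σ R} (hf : IsSumSq (m.leadingCoeff f)) (hg : IsSumSq (m.leadingCoeff g)) :
    m.degree f ≼[m] m.degree (f + g) := by
  rcases lt_or_ge (m.toSyn (m.degree f)) (m.toSyn (m.degree g)) with h_lt | h_ge
  · rw [m.degree_add_eq_right_of_lt h_lt]
    exact h_lt.le
  · by_contra! h_drop
    have h_cancel : m.leadingCoeff f + g.coeff (m.degree f) = 0 := by
      rw [MonomialOrder.leadingCoeff, ← coeff_add, m.coeff_eq_zero_of_lt h_drop]
    have hf_zero : f = 0 := m.leadingCoeff_eq_zero_iff.mp <|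
      IsFormallyReal.eq_zero_of_add_right hf (isSumSq_coeff_of_degree_le hg h_ge) h_cancel
    rw [hf_zero, m.degree_zero, map_zero] at h_drop
    exact h_drop.not_ge (m.zero_le _)

theorem isSumSq_leadingCoeff_add [CommSemiring R] [IsFormallyReal R] {f g : MvPolynomial σ R}
    (hf : IsSumSq (m.leadingCoeff f)) (hg : IsSumSq (m.leadingCoeff g)) :
    IsSumSq (m.leadingCoeff (f + g)) := by
  have hf_le := degree_le_degree_add_of_isSumSq_leadingCoeff hf hg
  have hg_le := degree_le_degree_add_of_isSumSq_leadingCoeff hg hf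
  rw [add_comm g f] at hg_le
  rw [MonomialOrder.leadingCoeff, coeff_add]
  exact (isSumSq_coeff_of_degree_le hf hf_le).add (isSumSq_coeff_of_degree_le hg hg_le)

theorem totalDegree_pow_of_isReduced [CommSemiring R] [IsReduced R] (f : MvPolynomial σ R)
    (k : ℕ) : (f ^ k).totalDegree = k * f.totalDegree := by
  obtain ⟨_, _⟩ := exists_wellFoundedGT σ
  simp only [← degree_degLexDegree, MonomialOrder.degree_pow, map_nsmul, smul_eq_mul]

variable [CommRing R] [IsFormallyReal R]

variable (m) in
theorem isSumSq_leadingCoeff {s : MvPolynomial σ R} (hs : IsSumSq s) :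
    IsSumSq (m.leadingCoeff s) := by
  induction hs with
  | zero => simp
  | sq_add a _ ih =>
    refine isSumSq_leadingCoeff_add ?_ ih
    rw [← pow_two, m.leadingCoeff_pow, pow_two]
    exact .mul_self _

theorem totalDegree_le_totalDegree_add_of_isSumSq {f g : MvPolynomial σ R}
    (hf : IsSumSq f) (hg : IsSumSq g) : f.totalDegree ≤ (f + g).totalDegree := by
  obtain ⟨_, _⟩ := exists_wellFoundedGT σ
  exact degLex_totalDegree_monotone <| degree_le_degree_add_of_isSumSq_leadingCoeff
    (isSumSq_leadingCoeff _ hf) (isSumSq_leadingCoeff _ hg)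

end LeadingCoefficients

section Positivity

variable {F M : Type*} [AddCommMonoid M] [PartialOrder M] [IsOrderedAddMonoid M]

theorem map_mul_nonneg_of_isSumSq {σ R : Type*} [CommRing R] [IsFormallyReal R]
    [FunLike F (MvPolynomial σ R) M] [AddMonoidHomClass F (MvPolynomial σ R) M] {L : F}
    {h s : MvPolynomial σ R} {k : ℕ}
    (hL : ∀ q : MvPolynomial σ R, q.totalDegree ≤ k → 0 ≤ L (h * q ^ 2))
    (hs : IsSumSq s) (hsk : s.totalDegree ≤ 2 * k + 1) : 0 ≤ L (h * s) := by
  induction hs with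
  | zero => simp
  | @sq_add a s hs ih =>
    have ha_deg : (a ^ 2).totalDegree ≤ 2 * k + 1 := by
      rw [pow_two]
      exact (totalDegree_le_totalDegree_add_of_isSumSq (.mul_self a) hs).trans hsk
    have hs_deg : s.totalDegree ≤ 2 * k + 1 := by
      rw [add_comm] at hsk
      exact (totalDegree_le_totalDegree_add_of_isSumSq hs (.mul_self a)).trans hsk
    rw [totalDegree_pow_of_isReduced] at ha_deg
    rw [mul_add, map_add, ← pow_two]
    exact add_nonneg (hL a (by lia)) (ih hs_deg)

theorem map_mul_nonneg_of_totalDegree_mul_le {σ : Type*}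
    [FunLike F (MvPolynomial σ ℝ) M] [AddMonoidHomClass F (MvPolynomial σ ℝ) M] {L : F}
    {h s : MvPolynomial σ ℝ} {l : ℕ}
    (hL : ∀ q : MvPolynomial σ ℝ, q.totalDegree ≤ l - halfDeg h → 0 ≤ L (h * q ^ 2))
    (hs : IsSumSq s) (hsh : (s * h).totalDegree ≤ 2 * l) : 0 ≤ L (s * h) := by
  rcases eq_or_ne s 0 with rfl | hs0
  · simp
  rcases eq_or_ne h 0 with rfl | hh0
  · simp
  rw [totalDegree_mul_of_isDomain hs0 hh0] at hsh
  rw [mul_comm]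
  -- Rounding `deg h / 2` up costs one degree when `deg h` is odd.
  have hs_deg : s.totalDegree ≤ 2 * (l - halfDeg h) + 1 := by
    unfold halfDeg
    lia
  exact map_mul_nonneg_of_isSumSq hL hs hs_deg

theorem map_nonneg_of_mem_Qmod {n p l : ℕ} {ι : Type*} [Fintype ι]
    [FunLike F (MvPolynomial (Fin n ⊕ Fin p) ℝ) M]
    [AddMonoidHomClass F (MvPolynomial (Fin n ⊕ Fin p) ℝ) M] {L : F}
    {hs : ι → MvPolynomial (Fin n ⊕ Fin p) ℝ} {f : MvPolynomial (Fin n ⊕ Fin p) ℝ}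
    (hL : ∀ q : MvPolynomial (Fin n ⊕ Fin p) ℝ, q.totalDegree ≤ l → 0 ≤ L (q ^ 2))
    (hLloc : ∀ j, ∀ q : MvPolynomial (Fin n ⊕ Fin p) ℝ,
      q.totalDegree ≤ l - halfDeg (hs j) → 0 ≤ L (hs j * q ^ 2))
    (hf : f ∈ Qmod n p hs l) : 0 ≤ L f := by
  obtain ⟨σ₀, σ, hσ₀, hσ, rfl, hσ₀_deg, hσ_deg⟩ := hf
  rw [map_add, map_sum]
  refine add_nonneg ?_ (Finset.sum_nonneg fun j _ =>
    map_mul_nonneg_of_totalDegree_mul_le (hLloc j) (hσ j) (hσ_deg j))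
  have hL_one : ∀ q : MvPolynomial (Fin n ⊕ Fin p) ℝ, q.totalDegree ≤ l → 0 ≤ L (1 * q ^ 2) := by
    simpa only [one_mul] using hL
  simpa only [one_mul] using map_mul_nonneg_of_isSumSq hL_one hσ₀ (by lia)

end Positivity

section RieszFunctional

variable {n p : ℕ} (z : (Fin n → ℕ) → (Fin p → ℕ) → ℝ)

/-- The functional `L_z` as a linear map, defined by its values on the monomial basis. -/
def rieszFunctional : MvPolynomial (Fin n ⊕ Fin p) ℝ →ₗ[ℝ] ℝ :=
  (basisMonomials (Fin n ⊕ Fin p) ℝ).constr ℝ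
    fun d => z (fun k => d (Sum.inl k)) (fun l => d (Sum.inr l))

theorem rieszFunctional_apply (q : MvPolynomial (Fin n ⊕ Fin p) ℝ) :
    rieszFunctional z q = Lz n p z q :=
  (basisMonomials (Fin n ⊕ Fin p) ℝ).constr_apply ℝ _ q

theorem rieszFunctional_monomial (d : Fin n ⊕ Fin p →₀ ℕ) (a : ℝ) :
    rieszFunctional z (monomial d a) =
      a * z (fun k => d (Sum.inl k)) (fun l => d (Sum.inr l)) := by
  have h_basis : monomial d a = a • basisMonomials (Fin n ⊕ Fin p) ℝ d := by
    simp [smul_monomial]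
  rw [h_basis, map_smul, rieszFunctional, Module.Basis.constr_basis, smul_eq_mul]

theorem rieszFunctional_C (a : ℝ) :
    rieszFunctional z (C a) = a * z (fun _ => 0) (fun _ => 0) :=
  rieszFunctional_monomial z 0 a

end RieszFunctional

theorem degOK_of_totalDegree_le {n p i : ℕ} {q : MvPolynomial (Fin n ⊕ Fin p) ℝ}
    (hq : q.totalDegree ≤ i) : DegOK n p i q := by
  intro d hd
  have h_sum : ∑ k, d (Sum.inl k) + ∑ k, d (Sum.inr k) ≤ i := by
    rw [← Fintype.sum_sum_type, ← Finsupp.degree_eq_sum]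
    exact (le_totalDegree hd).trans hq
  lia

theorem stmt18_general {n p l : ℕ} {ι : Type*} [Fintype ι]
    {hs : ι → MvPolynomial (Fin n ⊕ Fin p) ℝ} {f : MvPolynomial (Fin n ⊕ Fin p) ℝ} {N : ℝ}
    (hplus : C N + f ∈ Qmod n p hs l) (hminus : C N - f ∈ Qmod n p hs l)
    (z : (Fin n → ℕ) → (Fin p → ℕ) → ℝ)
    (hM : ∀ q : MvPolynomial (Fin n ⊕ Fin p) ℝ, q.totalDegree ≤ l → 0 ≤ Lz n p z (q ^ 2))
    (hMloc : ∀ j, ∀ q : MvPolynomial (Fin n ⊕ Fin p) ℝ,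
      q.totalDegree ≤ l - halfDeg (hs j) → 0 ≤ Lz n p z (hs j * q ^ 2)) :
    |Lz n p z f| ≤ N * z (fun _ => 0) (fun _ => 0) := by
  simp only [← rieszFunctional_apply] at hM hMloc ⊢
  have h_plus := map_nonneg_of_mem_Qmod hM hMloc hplus
  have h_minus := map_nonneg_of_mem_Qmod hM hMloc hminus
  rw [map_add, rieszFunctional_C] at h_plus
  rw [map_sub, rieszFunctional_C] at h_minus
  exact abs_le.mpr ⟨by linarith, by linarith⟩

/-- if both `N ± x^α y^β` lie in the truncated quadratic module `Q(l)`,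
then every sequence `z` with `z_{00} = 1`, `M_l(z) ⪰ 0` and `M_{l-v_j}(h_j z) ⪰ 0` for
all `j` (positive semidefiniteness expressed via the quadratic forms `L_z(q²)`, resp.
`L_z(h_j q²)`) satisfies `|z_{αβ}| = |L_z(x^α y^β)| ≤ N`. -/
theorem stmt18 (n p t l : ℕ)
    (hs : Fin t → MvPolynomial (Fin n ⊕ Fin p) ℝ)
    (α : Fin n → ℕ) (β : Fin p → ℕ) (N : ℝ)
    (mono : MvPolynomial (Fin n ⊕ Fin p) ℝ)
    (hmono : mono = monomial (Finsupp.equivFunOnFinite.symm (Sum.elim α β)) (1 : ℝ))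
    (hplus : C N + mono ∈ Qmod n p hs l)
    (hminus : C N - mono ∈ Qmod n p hs l)
    (z : (Fin n → ℕ) → (Fin p → ℕ) → ℝ)
    (hz1 : z (fun _ => 0) (fun _ => 0) = 1)
    (hM : ∀ q, DegOK n p l q → 0 ≤ Lz n p z (q ^ 2))
    (hMloc : ∀ j, ∀ q, DegOK n p (l - halfDeg (hs j)) q → 0 ≤ Lz n p z (hs j * q ^ 2)) :
    Lz n p z mono = z α β ∧ |z α β| ≤ N := by
  have hL : Lz n p z mono = z α β := by
    simp [hmono, ← rieszFunctional_apply, rieszFunctional_monomial]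
  have hN := stmt18_general hplus hminus z (fun q hq => hM q (degOK_of_totalDegree_le hq))
    (fun j q hq => hMloc j q (degOK_of_totalDegree_le hq))
  exact ⟨hL, by rwa [hL, hz1, mul_one] at hN⟩
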